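/- For every 2 ≤ q ≤ 6 there exists a constant C = C(q) such that for every smooth compactly supported function φ : ℝ³ → ℝ, ‖φ‖_q ≤ C ‖φ‖₂^{(6−q)/(2q)} ‖φ_x‖₂^{(q−2)/(2q)} ‖φ_y‖₂^{(q−2)/(2q)} ‖φ_z‖₂^{(q−2)/(2q)}. -/

import Mathlib

/-!
The inequality splits into two parts. Hölder's inequality bounds `‖φ‖_q` by a product of powers of
`‖φ‖₂` and `‖φ‖₆` (`Lnorm_interp`), so it remains to prove `‖φ‖₆ ≤ C ∏ᵢ ‖∂ᵢφ‖₂ ^ (1/3)`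
(`sobolev_mul`).

The Gagliardo–Nirenberg–Sobolev inequality gives the additive form `‖φ‖₆ ≤ K ∑ᵢ ‖∂ᵢφ‖₂`
(`exists_sobolev`). Applying it to `φ(l₀ x, l₁ y, l₂ z)` and changing variables gives
`‖φ‖₆ ≤ K (l₀ l₁ l₂) ^ (-1/3) ∑ᵢ lᵢ ‖∂ᵢφ‖₂` for all positive `lᵢ` (`sobolev_dil`). The choice
`lᵢ = (‖∂ᵢφ‖₂ + ε)⁻¹` bounds each summand by `1`, and `ε → 0` gives the multiplicative form.
-/

open MeasureTheory

noncomputable section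

/-- Three-dimensional Euclidean space. -/
abbrev E3 : Type := EuclideanSpace ℝ (Fin 3)

/-- The `i`-th standard basis vector of `ℝ³`. -/
def ee (i : Fin 3) : E3 := EuclideanSpace.single i 1

/-- The partial derivative of a scalar function in the `i`-th coordinate direction. -/
def pd (i : Fin 3) (f : E3 → ℝ) : E3 → ℝ := fun x => fderiv ℝ f x (ee i)

/-- The partial derivative of a vector field in the `i`-th coordinate direction. -/
def pdv (i : Fin 3) (u : E3 → E3) : E3 → E3 := fun x => fderiv ℝ u x (ee i)

/-- The `Lʳ(ℝ³)` norm of a scalar function. -/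
def Lnorm (r : ℝ) (f : E3 → ℝ) : ℝ := (eLpNorm f (ENNReal.ofReal r) volume).toReal

/-- The `Lʳ(ℝ³)` norm of a vector field (with the pointwise Euclidean norm). -/
def LnormV (r : ℝ) (u : E3 → E3) : ℝ := (eLpNorm u (ENNReal.ofReal r) volume).toReal

/-- The pointwise (Frobenius) norm of the full gradient matrix of a vector field. -/
def gradNormAt (u : E3 → E3) (x : E3) : ℝ :=
  Real.sqrt (∑ i, ∑ j, (fderiv ℝ u x (ee j) i) ^ 2)

/-- The squared pointwise Frobenius norm `|∇u|²` of the gradient of a vector field. -/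
def frobSq (u : E3 → E3) (x : E3) : ℝ := ∑ i, ∑ j, (fderiv ℝ u x (ee j) i) ^ 2

/-- The `Lʳ` norm of the full gradient of a vector field. -/
def LnormGrad (r : ℝ) (u : E3 → E3) : ℝ := Lnorm r (gradNormAt u)

/-- The `i`-th component of the (componentwise) Laplacian of a vector field. -/
def lapC (u : E3 → E3) (x : E3) (i : Fin 3) : ℝ :=
  ∑ j, fderiv ℝ (fun y => fderiv ℝ u y (ee j) i) x (ee j)

/-- The pointwise Euclidean norm `|Δu|` of the Laplacian of a vector field. -/
def lapNormAt (u : E3 → E3) (x : E3) : ℝ := Real.sqrt (∑ i, (lapC u x i) ^ 2)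

/-- The Laplacian of a scalar function. -/
def lapR (f : E3 → ℝ) (x : E3) : ℝ :=
  ∑ j, fderiv ℝ (fun y => fderiv ℝ f y (ee j)) x (ee j)

/-- The pointwise norm `|∇|w|²|` of the gradient of the squared modulus of a vector field. -/
def gradOfSqNormAt (w : E3 → E3) (x : E3) : ℝ :=
  Real.sqrt (∑ j, (pd j (fun y => ‖w y‖ ^ 2) x) ^ 2)

/-- A vector field is divergence free. -/
def DivFree (u : E3 → E3) : Prop := ∀ x, ∑ i, fderiv ℝ u x (ee i) i = 0

/-- A vector field is (the coercion of) a Schwartz map. -/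
def SchwartzClassV (f : E3 → E3) : Prop := ∃ g : SchwartzMap E3 E3, ⇑g = f

/-- A scalar function is (the coercion of) a Schwartz map. -/
def SchwartzClassR (f : E3 → ℝ) : Prop := ∃ g : SchwartzMap E3 ℝ, ⇑g = f

/-- The `H¹` norm of a vector field: `L²` norm plus `L²` norm of the gradient. -/
def H1norm (f : E3 → E3) : ℝ := LnormV 2 f + LnormGrad 2 f

/-- `(u, b, p)` is a smooth, spatially Schwartz-class solution of the 3D incompressible
MHD equations with unit viscosity and magnetic diffusivity for times in the set `S`:
`uₜ + (u·∇)u = Δu − ∇p + (b·∇)b`, `bₜ + (u·∇)b = Δb + (b·∇)u`, `∇·u = 0`, `∇·b = 0`. -/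
structure MHDSolution (S : Set ℝ) (u b : ℝ → E3 → E3) (p : ℝ → E3 → ℝ) : Prop where
  smooth_u : ContDiffOn ℝ (⊤ : ℕ∞) (fun q : ℝ × E3 => u q.1 q.2) (S ×ˢ Set.univ)
  smooth_b : ContDiffOn ℝ (⊤ : ℕ∞) (fun q : ℝ × E3 => b q.1 q.2) (S ×ˢ Set.univ)
  smooth_p : ContDiffOn ℝ (⊤ : ℕ∞) (fun q : ℝ × E3 => p q.1 q.2) (S ×ˢ Set.univ)
  schwartz_u : ∀ t ∈ S, SchwartzClassV (u t)
  schwartz_b : ∀ t ∈ S, SchwartzClassV (b t)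
  schwartz_p : ∀ t ∈ S, SchwartzClassR (p t)
  div_u : ∀ t ∈ S, DivFree (u t)
  div_b : ∀ t ∈ S, DivFree (b t)
  eq_u : ∀ t ∈ S, ∀ x : E3, ∀ i : Fin 3,
    deriv (fun s => u s x i) t + ∑ j, u t x j * fderiv ℝ (u t) x (ee j) i
      = lapC (u t) x i - pd i (p t) x + ∑ j, b t x j * fderiv ℝ (b t) x (ee j) i
  eq_b : ∀ t ∈ S, ∀ x : E3, ∀ i : Fin 3,
    deriv (fun s => b s x i) t + ∑ j, u t x j * fderiv ℝ (b t) x (ee j) i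
      = lapC (b t) x i + ∑ j, b t x j * fderiv ℝ (u t) x (ee j) i

/-- Interpolation of `Lʳ` norms: Hölder's inequality for
`|φ| ^ q = (|φ| ^ 2) ^ ((6 - q) / 4) * (|φ| ^ 6) ^ ((q - 2) / 4)`. -/
lemma Lnorm_interp {q : ℝ} (hq2 : 2 ≤ q) (hq6 : q ≤ 6) {φ : E3 → ℝ} (hφ : Continuous φ)
    (hc : HasCompactSupport φ) :
    Lnorm q φ ≤ (Lnorm 2 φ) ^ ((6 - q) / (2 * q)) * (Lnorm 6 φ) ^ (3 * ((q - 2) / (2 * q))) := by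
  have hq0 : 0 < q := by linarith
  have hfin : ∀ r : ℝ, eLpNorm φ (ENNReal.ofReal r) volume ≠ ⊤ := fun r =>
    (hφ.memLp_of_hasCompactSupport hc).2.ne
  have hE : ∀ r : ℝ, 0 < r → eLpNorm φ (ENNReal.ofReal r) volume
      = (∫⁻ x, ‖φ x‖ₑ ^ r) ^ (1 / r) := by
    intro r hr
    rw [eLpNorm_eq_lintegral_rpow_enorm_toReal (by simpa using hr) ENNReal.ofReal_ne_top,
      ENNReal.toReal_ofReal hr.le]
  have hm : ∀ r : ℝ, AEMeasurable (fun x => ‖φ x‖ₑ ^ r) volume := fun r =>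
    (hφ.measurable.enorm.pow_const r).aemeasurable
  have h1 : ∫⁻ x, ‖φ x‖ₑ ^ q
      ≤ (∫⁻ x, ‖φ x‖ₑ ^ (2 : ℝ)) ^ ((6 - q) / 4) * (∫⁻ x, ‖φ x‖ₑ ^ (6 : ℝ)) ^ ((q - 2) / 4) := by
    refine le_trans (le_of_eq ?_) (ENNReal.lintegral_mul_norm_pow_le (hm 2) (hm 6)
      (p := (6 - q) / 4) (q := (q - 2) / 4) (by linarith) (by linarith) (by ring))
    refine lintegral_congr fun x => ?_
    rw [← ENNReal.rpow_mul, ← ENNReal.rpow_mul, ← ENNReal.rpow_add_of_nonneg _ _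
      (by linarith) (by linarith)]
    congr 1
    ring
  have h2 : eLpNorm φ (ENNReal.ofReal q) volume
      ≤ eLpNorm φ (ENNReal.ofReal 2) volume ^ ((6 - q) / (2 * q))
        * eLpNorm φ (ENNReal.ofReal 6) volume ^ (3 * ((q - 2) / (2 * q))) := by
    rw [hE q hq0, hE 2 (by norm_num), hE 6 (by norm_num), ← ENNReal.rpow_mul, ← ENNReal.rpow_mul]
    refine (ENNReal.rpow_le_rpow h1 (by positivity)).trans (le_of_eq ?_)
    rw [ENNReal.mul_rpow_of_nonneg _ _ (by positivity), ← ENNReal.rpow_mul, ← ENNReal.rpow_mul]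
    congr 2 <;> (field_simp; try ring)
  have e1 : 0 ≤ (6 - q) / (2 * q) := div_nonneg (by linarith) (by linarith)
  have e2 : 0 ≤ 3 * ((q - 2) / (2 * q)) :=
    mul_nonneg (by norm_num) (div_nonneg (by linarith) (by linarith))
  have h3 := ENNReal.toReal_mono (ENNReal.mul_ne_top (ENNReal.rpow_ne_top_of_nonneg e1 (hfin 2))
    (ENNReal.rpow_ne_top_of_nonneg e2 (hfin 6))) h2
  rwa [ENNReal.toReal_mul, ← ENNReal.toReal_rpow, ← ENNReal.toReal_rpow] at h3

lemma norm_le_sum_ee (A : E3 →L[ℝ] ℝ) : ‖A‖ ≤ ∑ i, ‖A (ee i)‖ := by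
  refine A.opNorm_le_bound (by positivity) fun x => ?_
  have hx : x = ∑ i, x i • ee i := by
    have := (EuclideanSpace.basisFun (Fin 3) ℝ).sum_repr x
    simpa [ee] using this.symm
  have h : A x = ∑ i, x i * A (ee i) := by
    conv_lhs => rw [hx]
    simp
  rw [h, Finset.sum_mul]
  refine (norm_sum_le _ _).trans (Finset.sum_le_sum fun i _ => ?_)
  rw [norm_mul, mul_comm]
  gcongr
  exact PiLp.norm_apply_le x i

lemma continuous_pd {φ : E3 → ℝ} (hφ : ContDiff ℝ (⊤ : ℕ∞) φ) (i : Fin 3) :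
    Continuous (pd i φ) :=
  (hφ.continuous_fderiv (by simp)).clm_apply continuous_const

lemma hasCompactSupport_pd {φ : E3 → ℝ} (hc : HasCompactSupport φ) (i : Fin 3) :
    HasCompactSupport (pd i φ) :=
  hc.fderiv_apply ℝ (ee i)

/-- The isotropic Sobolev inequality in `ℝ³`, with the gradient split into its components. -/
lemma exists_sobolev : ∃ K : ℝ, 0 ≤ K ∧ ∀ φ : E3 → ℝ, ContDiff ℝ (⊤ : ℕ∞) φ →
    HasCompactSupport φ → Lnorm 6 φ ≤ K * ∑ i, Lnorm 2 (pd i φ) := by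
  refine ⟨eLpNormLESNormFDerivOfEqInnerConst (volume : Measure E3) (2 : NNReal), by positivity,
    fun φ hφ hc => ?_⟩
  have h := eLpNorm_le_eLpNorm_fderiv_of_eq_inner (volume : Measure E3) (p := 2) (p' := 6)
    (hφ.of_le (by simp)) hc (by norm_num) (by simp)
    (by rw [finrank_euclideanSpace_fin]; norm_num)
  have h2 : eLpNorm (fderiv ℝ φ) 2 volume ≤ ∑ i, eLpNorm (pd i φ) 2 volume := by
    calc eLpNorm (fderiv ℝ φ) 2 volume
        ≤ eLpNorm (∑ i, fun x => ‖pd i φ x‖) 2 volume :=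
          eLpNorm_mono_real fun x => by
            simpa [pd, Finset.sum_apply] using norm_le_sum_ee (fderiv ℝ φ x)
      _ ≤ ∑ i, eLpNorm (fun x => ‖pd i φ x‖) 2 volume :=
          eLpNorm_sum_le (fun i _ => (continuous_pd hφ i).norm.aestronglyMeasurable) (by norm_num)
      _ = ∑ i, eLpNorm (pd i φ) 2 volume := by simp only [eLpNorm_norm]
  have hfin : ∀ i, eLpNorm (pd i φ) 2 volume ≠ ⊤ := fun i =>
    ((continuous_pd hφ i).memLp_of_hasCompactSupport (hasCompactSupport_pd hc i)).2.ne
  have h3 := ENNReal.toReal_mono (ENNReal.mul_ne_top ENNReal.coe_ne_top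
    (ENNReal.sum_ne_top.2 fun i _ => hfin i)) (h.trans (mul_le_mul_right h2 _))
  rw [ENNReal.toReal_mul, ENNReal.toReal_sum fun i _ => hfin i] at h3
  simpa [Lnorm] using h3

/-- The anisotropic dilation of `ℝ³` with factors `l 0`, `l 1`, `l 2` along the axes. -/
def dil (l : Fin 3 → ℝ) : E3 →L[ℝ] E3 :=
  LinearMap.toContinuousLinearMap
    (Matrix.toLin (EuclideanSpace.basisFun (Fin 3) ℝ).toBasis
      (EuclideanSpace.basisFun (Fin 3) ℝ).toBasis (Matrix.diagonal l))

lemma dil_ee (l : Fin 3 → ℝ) (i : Fin 3) : dil l (ee i) = l i • ee i := by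
  have h := Matrix.toLin_self (EuclideanSpace.basisFun (Fin 3) ℝ).toBasis
    (EuclideanSpace.basisFun (Fin 3) ℝ).toBasis (Matrix.diagonal l) i
  simpa [Matrix.diagonal_apply, Finset.sum_ite_eq, ee, dil, ite_smul] using h

lemma det_dil (l : Fin 3 → ℝ) : LinearMap.det (dil l : E3 →ₗ[ℝ] E3) = ∏ i, l i := by
  simp [dil, LinearMap.det_toLin, Matrix.det_diagonal]

lemma Lnorm_comp_dil {l : Fin 3 → ℝ} (hl : ∀ i, 0 < l i) {r : ℝ} (hr : 0 < r) {f : E3 → ℝ}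
    (hf : Continuous f) : Lnorm r (f ∘ dil l) = (∏ i, l i)⁻¹ ^ (1 / r) * Lnorm r f := by
  have hd : 0 < ∏ i, l i := Finset.prod_pos fun i _ => hl i
  have hmap := Measure.map_linearMap_addHaar_eq_smul_addHaar (volume : Measure E3)
    (f := (dil l : E3 →ₗ[ℝ] E3)) (by rw [det_dil]; exact hd.ne')
  rw [det_dil, abs_of_pos (inv_pos.2 hd)] at hmap
  have h := eLpNorm_map_measure (p := ENNReal.ofReal r) (μ := (volume : Measure E3)) (g := f)
    (f := dil l) hf.aestronglyMeasurable (dil l).continuous.aemeasurable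
  have hmap' : Measure.map (dil l) (volume : Measure E3)
    = ENNReal.ofReal (∏ i, l i)⁻¹ • volume := hmap
  rw [hmap', eLpNorm_smul_measure_of_ne_top ENNReal.ofReal_ne_top] at h
  rw [Lnorm, ← h, smul_eq_mul, ENNReal.toReal_mul, ← ENNReal.toReal_rpow,
    ENNReal.toReal_ofReal (by positivity), ENNReal.toReal_div, ENNReal.toReal_ofReal hr.le]
  simp [Lnorm]

lemma hasCompactSupport_comp_dil {l : Fin 3 → ℝ} (hl : ∀ i, 0 < l i) {φ : E3 → ℝ}
    (hc : HasCompactSupport φ) : HasCompactSupport (φ ∘ dil l) := by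
  have hd : 0 < ∏ i, l i := Finset.prod_pos fun i _ => hl i
  have hu : LinearMap.det (dil l : E3 →ₗ[ℝ] E3) ≠ 0 := by rw [det_dil]; exact hd.ne'
  exact hc.comp_isClosedEmbedding
    (LinearEquiv.toContinuousLinearEquiv
      (LinearMap.equivOfDetNeZero (dil l : E3 →ₗ[ℝ] E3) hu)).toHomeomorph.isClosedEmbedding

lemma pd_comp_dil (l : Fin 3 → ℝ) {φ : E3 → ℝ} (hφ : ContDiff ℝ (⊤ : ℕ∞) φ) (i : Fin 3) :
    pd i (φ ∘ dil l) = l i • (pd i φ ∘ dil l) := by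
  ext x
  have hdiff : DifferentiableAt ℝ φ (dil l x) := (hφ.differentiable (by simp)) _
  simp only [pd]
  rw [fderiv_comp x hdiff (dil l).differentiableAt, ContinuousLinearMap.fderiv]
  simp [dil_ee, pd]

/-- The additive Sobolev inequality for `φ ∘ dil l`, rewritten in terms of `φ`. -/
lemma sobolev_dil {K : ℝ} (hK : ∀ φ : E3 → ℝ, ContDiff ℝ (⊤ : ℕ∞) φ →
    HasCompactSupport φ → Lnorm 6 φ ≤ K * ∑ i, Lnorm 2 (pd i φ))
    {φ : E3 → ℝ} (hφ : ContDiff ℝ (⊤ : ℕ∞) φ) (hc : HasCompactSupport φ)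
    {l : Fin 3 → ℝ} (hl : ∀ i, 0 < l i) :
    Lnorm 6 φ ≤ K * (∏ i, l i)⁻¹ ^ (1 / 3 : ℝ) * ∑ i, l i * Lnorm 2 (pd i φ) := by
  have hd : 0 < (∏ i, l i)⁻¹ := inv_pos.2 (Finset.prod_pos fun i _ => hl i)
  have h := hK _ (hφ.comp (dil l).contDiff) (hasCompactSupport_comp_dil hl hc)
  have hpd : ∀ i, Lnorm 2 (pd i (φ ∘ dil l))
      = (∏ i, l i)⁻¹ ^ (1 / 2 : ℝ) * (l i * Lnorm 2 (pd i φ)) := by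
    intro i
    have : Lnorm 2 (pd i (φ ∘ dil l)) = l i * Lnorm 2 (pd i φ ∘ dil l) := by
      rw [pd_comp_dil l hφ, Lnorm, eLpNorm_const_smul, ENNReal.toReal_mul]
      simp [Lnorm, abs_of_pos (hl i)]
    rw [this, Lnorm_comp_dil hl (by norm_num) (continuous_pd hφ i)]
    ring
  simp only [hpd, ← Finset.mul_sum] at h
  rw [Lnorm_comp_dil hl (by norm_num) hφ.continuous] at h
  have hsplit : (∏ i, l i)⁻¹ ^ (1 / 2 : ℝ)
      = (∏ i, l i)⁻¹ ^ (1 / 6 : ℝ) * (∏ i, l i)⁻¹ ^ (1 / 3 : ℝ) := by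
    rw [← Real.rpow_add hd]; norm_num
  rw [hsplit] at h
  refine le_of_mul_le_mul_left (h.trans (le_of_eq ?_)) (Real.rpow_pos_of_pos hd (1 / 6))
  ring

/-- The multiplicative form of the Sobolev inequality, deduced from the additive form `hK` by
optimizing over anisotropic dilations. -/
lemma sobolev_mul {K : ℝ} (hK0 : 0 ≤ K) (hK : ∀ φ : E3 → ℝ, ContDiff ℝ (⊤ : ℕ∞) φ →
    HasCompactSupport φ → Lnorm 6 φ ≤ K * ∑ i, Lnorm 2 (pd i φ))
    {φ : E3 → ℝ} (hφ : ContDiff ℝ (⊤ : ℕ∞) φ) (hc : HasCompactSupport φ) :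
    Lnorm 6 φ ≤ 3 * K * (∏ i, Lnorm 2 (pd i φ)) ^ (1 / 3 : ℝ) := by
  set a : Fin 3 → ℝ := fun i => Lnorm 2 (pd i φ) with ha
  have ha0 : ∀ i, 0 ≤ a i := fun i => ENNReal.toReal_nonneg
  -- Some `a i` may vanish, so the dilation factors are `(a i + ε)⁻¹`, and then `ε → 0`.
  have hε : ∀ ε : ℝ, 0 < ε → Lnorm 6 φ ≤ 3 * K * (∏ i, (a i + ε)) ^ (1 / 3 : ℝ) := by
    intro ε he
    have hp : ∀ i, 0 < a i + ε := fun i => by have := ha0 i; linarith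
    have h := sobolev_dil hK hφ hc (l := fun i => (a i + ε)⁻¹) fun i => inv_pos.2 (hp i)
    rw [Finset.prod_inv_distrib, inv_inv] at h
    have hs : ∑ i, (a i + ε)⁻¹ * Lnorm 2 (pd i φ) ≤ 3 := by
      calc ∑ i, (a i + ε)⁻¹ * Lnorm 2 (pd i φ) ≤ ∑ i : Fin 3, (1 : ℝ) := by
            refine Finset.sum_le_sum fun i _ => ?_
            rw [inv_mul_le_iff₀ (hp i)]
            change a i ≤ _
            linarith
        _ = 3 := by simp
    have hP : 0 ≤ (∏ i, (a i + ε)) ^ (1 / 3 : ℝ) :=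
      Real.rpow_nonneg (Finset.prod_nonneg fun i _ => (hp i).le) _
    refine h.trans ((mul_le_mul_of_nonneg_left hs (mul_nonneg hK0 hP)).trans (le_of_eq ?_))
    ring
  have hcont : Continuous fun ε : ℝ => 3 * K * (∏ i, (a i + ε)) ^ (1 / 3 : ℝ) := by
    refine continuous_const.mul (Continuous.rpow_const ?_ fun _ => Or.inr (by norm_num))
    fun_prop
  have hlim := (hcont.tendsto 0).mono_left (nhdsWithin_le_nhds (s := Set.Ioi 0))
  simp only [add_zero] at hlim
  exact ge_of_tendsto hlim (Filter.eventually_of_mem self_mem_nhdsWithin hε)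

/-- **Lemma A.2 (inequality (1.10)).** For every `2 ≤ q ≤ 6` there is a constant
`C = C(q)` such that every smooth compactly supported `φ : ℝ³ → ℝ` satisfies
`‖φ‖_q ≤ C ‖φ‖₂^{(6−q)/(2q)} ‖φ_x‖₂^{(q−2)/(2q)} ‖φ_y‖₂^{(q−2)/(2q)} ‖φ_z‖₂^{(q−2)/(2q)}`. -/
theorem stmt18 (q : ℝ) (hq2 : 2 ≤ q) (hq6 : q ≤ 6) :
    ∃ C : ℝ, ∀ φ : E3 → ℝ, ContDiff ℝ (⊤ : ℕ∞) φ → HasCompactSupport φ →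
      Lnorm q φ
        ≤ C * (Lnorm 2 φ) ^ ((6 - q) / (2 * q))
            * (Lnorm 2 (pd 0 φ)) ^ ((q - 2) / (2 * q))
            * (Lnorm 2 (pd 1 φ)) ^ ((q - 2) / (2 * q))
            * (Lnorm 2 (pd 2 φ)) ^ ((q - 2) / (2 * q)) := by
  obtain ⟨K, hK0, hK⟩ := exists_sobolev
  refine ⟨(3 * K) ^ (3 * ((q - 2) / (2 * q))), fun φ hφ hc => ?_⟩
  have hn : ∀ r f, 0 ≤ Lnorm r f := fun r f => ENNReal.toReal_nonneg
  have e2 : 0 ≤ (q - 2) / (2 * q) := div_nonneg (by linarith) (by linarith)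
  refine (Lnorm_interp hq2 hq6 hφ.continuous hc).trans ?_
  have h6 := Real.rpow_le_rpow (hn 6 φ) (sobolev_mul hK0 hK hφ hc)
    (mul_nonneg (by norm_num) e2 : 0 ≤ 3 * ((q - 2) / (2 * q)))
  have hP : 0 ≤ ∏ i, Lnorm 2 (pd i φ) := Finset.prod_nonneg fun i _ => hn _ _
  rw [Real.mul_rpow (by positivity) (Real.rpow_nonneg hP _), ← Real.rpow_mul hP,
    ← mul_assoc (1 / 3 : ℝ), one_div, inv_mul_cancel₀ (three_ne_zero), one_mul,
    Fin.prod_univ_three, Real.mul_rpow (mul_nonneg (hn _ _) (hn _ _)) (hn _ _),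
    Real.mul_rpow (hn _ _) (hn _ _)] at h6
  refine (mul_le_mul_of_nonneg_left h6 (Real.rpow_nonneg (hn 2 φ) _)).trans (le_of_eq ?_)
  ring
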